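/- arXiv:1712.04013 — 2 statements merged into one kernel-verified Lean document; each statement's English description precedes it below -/
import Mathlib

section
/- Let X be a measurable space and Q a weighted evolution operator on X satisfying the minorization condition with constant ε ∈ (0,1) and probability measure η. Define g_n = Qⁿ1 (so g_n ≥ εⁿ pointwise), the Markov operators S_n by (S_nφ)(q) = Q(g_n φ)(q)/(Q g_n)(q), and the operators K_n recursively by K_0 = Id and K_{n+1} = S_n ∘ K_n. Then for every probability measure μ on X, every n ∈ ℕ and every bounded measurable function φ, Φ_n(μ)(φ) = μ(g_n · (K_n φ)) / μ(g_n). -/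
open MeasureTheory ProbabilityTheory

/-- The action of a weighted evolution operator given by a kernel `κ`:
`(Qφ)(q) = ∫ φ(q') κ(q, dq')`. -/
noncomputable def evolOp {X : Type*} [MeasurableSpace X] (κ : Kernel X X) (φ : X → ℝ) : X → ℝ :=
  fun q => ∫ q', φ q' ∂(κ q)

/-- Bounded measurable real-valued functions. -/
def BddMeas {X : Type*} [MeasurableSpace X] (φ : X → ℝ) : Prop :=
  Measurable φ ∧ ∃ C : ℝ, ∀ x, |φ x| ≤ C

/-- Minorization condition: `ε η(φ) ≤ (Qφ)(q) ≤ ε⁻¹ η(φ)` for all bounded measurable `φ ≥ 0`. -/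
def Minorizes {X : Type*} [MeasurableSpace X] (Q : (X → ℝ) → (X → ℝ)) (ε : ℝ)
    (η : Measure X) : Prop :=
  ∀ φ : X → ℝ, BddMeas φ → (∀ x, 0 ≤ φ x) → ∀ q,
    ε * ∫ x, φ x ∂η ≤ Q φ q ∧ Q φ q ≤ ε⁻¹ * ∫ x, φ x ∂η

/-- The discretized Feynman–Kac semigroup `Φ_n(μ)(φ) = μ(Qⁿφ)/μ(Qⁿ1)`. -/
noncomputable def FK {X : Type*} [MeasurableSpace X] (κ : Kernel X X) (μ : Measure X)
    (n : ℕ) (φ : X → ℝ) : ℝ :=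
  (∫ q, (evolOp κ)^[n] φ q ∂μ) / (∫ q, (evolOp κ)^[n] (fun _ => (1:ℝ)) q ∂μ)

/-- The weights `g_n = Qⁿ1`. -/
noncomputable def gfun {X : Type*} [MeasurableSpace X] (κ : Kernel X X) (n : ℕ) : X → ℝ :=
  (evolOp κ)^[n] (fun _ => (1:ℝ))

/-- The Markov operators `(S_n φ)(q) = Q(g_n φ)(q) / (Q g_n)(q)`. -/
noncomputable def Sop {X : Type*} [MeasurableSpace X] (κ : Kernel X X) (n : ℕ)
    (φ : X → ℝ) : X → ℝ :=
  fun q => evolOp κ (fun q' => gfun κ n q' * φ q') q / evolOp κ (gfun κ n) q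

/-- The composed operators `K_0 = Id`, `K_{n+1} = S_n ∘ K_n`. -/
noncomputable def Kop {X : Type*} [MeasurableSpace X] (κ : Kernel X X) :
    ℕ → (X → ℝ) → (X → ℝ)
  | 0 => id
  | n + 1 => Sop κ n ∘ Kop κ n

/-!
Writing `g_n = Qⁿ1`, the definition of `S_n` gives `g_{n+1} · S_n ψ = Q (g_n ψ)`, hence
`g_n · K_n φ = Qⁿ φ` by induction. If `g_{n+1} = Q g_n` vanishes at `q`, then `g_n ≥ 0` is null
for `κ(q, ·)`, so `Q (g_n ψ)` vanishes at `q` too, and the first identity holds there whatever value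
is given to the quotient `S_n ψ`.
-/

section

variable {X : Type*} [MeasurableSpace X]

theorem BddMeas.integrable {φ : X → ℝ} (hφ : BddMeas φ) (μ : Measure X) [IsFiniteMeasure μ] :
    Integrable φ μ := by
  obtain ⟨hmeas, C, hC⟩ := hφ
  exact .of_bound hmeas.aestronglyMeasurable C (.of_forall hC)

theorem integral_mul_eq_zero_of_integral_eq_zero {μ : Measure X} {f : X → ℝ} (hf : 0 ≤ᵐ[μ] f)
    (hfi : Integrable f μ) (h : ∫ x, f x ∂μ = 0) (g : X → ℝ) : ∫ x, f x * g x ∂μ = 0 := by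
  have hf_zero : f =ᵐ[μ] 0 := (integral_eq_zero_iff_of_nonneg_ae hf hfi).mp h
  refine integral_eq_zero_of_ae ?_
  filter_upwards [hf_zero] with x hx
  simp [hx]

theorem bddMeas_evolOp (κ : Kernel X X) [IsFiniteKernel κ] {φ : X → ℝ} (hφ : BddMeas φ) :
    BddMeas (evolOp κ φ) := by
  obtain ⟨hmeas, C, hC⟩ := hφ
  refine ⟨hmeas.stronglyMeasurable.integral_kernel.measurable, C * κ.bound.toReal, fun q => ?_⟩
  have hC_nonneg : 0 ≤ C := (abs_nonneg _).trans (hC q)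
  calc |evolOp κ φ q|
      = ‖∫ q', φ q' ∂(κ q)‖ := rfl
    _ ≤ C * (κ q).real Set.univ := norm_integral_le_of_norm_le_const (.of_forall hC)
    _ ≤ C * κ.bound.toReal := by
      gcongr
      exact ENNReal.toReal_mono κ.bound_ne_top (κ.measure_le_bound q Set.univ)

theorem evolOp_nonneg (κ : Kernel X X) {φ : X → ℝ} (hφ : 0 ≤ φ) : 0 ≤ evolOp κ φ :=
  fun _ => integral_nonneg hφ

theorem gfun_succ (κ : Kernel X X) (n : ℕ) : gfun κ (n + 1) = evolOp κ (gfun κ n) :=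
  Function.iterate_succ_apply' ..

theorem gfun_nonneg (κ : Kernel X X) (n : ℕ) : 0 ≤ gfun κ n := by
  induction n with
  | zero => exact fun _ => zero_le_one
  | succ n ih => exact gfun_succ κ n ▸ evolOp_nonneg κ ih

theorem bddMeas_gfun (κ : Kernel X X) [IsFiniteKernel κ] (n : ℕ) : BddMeas (gfun κ n) := by
  induction n with
  | zero => exact ⟨measurable_const, 1, fun _ => abs_one.le⟩
  | succ n ih => exact gfun_succ κ n ▸ bddMeas_evolOp κ ih

theorem gfun_succ_mul_Sop (κ : Kernel X X) [IsFiniteKernel κ] (n : ℕ) (ψ : X → ℝ) (q : X) :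
    gfun κ (n + 1) q * Sop κ n ψ q = evolOp κ (fun q' => gfun κ n q' * ψ q') q := by
  rw [gfun_succ, Sop]
  exact mul_div_cancel_of_imp' fun h_zero =>
    integral_mul_eq_zero_of_integral_eq_zero (.of_forall (gfun_nonneg κ n))
      ((bddMeas_gfun κ n).integrable (κ q)) h_zero ψ

theorem gfun_mul_Kop (κ : Kernel X X) [IsFiniteKernel κ] (n : ℕ) (φ : X → ℝ) (q : X) :
    gfun κ n q * Kop κ n φ q = (evolOp κ)^[n] φ q := by
  induction n generalizing q with
  | zero => exact one_mul (φ q)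
  | succ n ih =>
    calc gfun κ (n + 1) q * Kop κ (n + 1) φ q
        = evolOp κ (fun q' => gfun κ n q' * Kop κ n φ q') q := gfun_succ_mul_Sop κ n _ q
      _ = evolOp κ ((evolOp κ)^[n] φ) q := by simp_rw [ih]
      _ = (evolOp κ)^[n + 1] φ q := by rw [Function.iterate_succ_apply']

theorem feynman_kac_weighted_reformulation_general (κ : Kernel X X) [IsFiniteKernel κ]
    (μ : Measure X) (n : ℕ) (φ : X → ℝ) :
    FK κ μ n φ = (∫ q, gfun κ n q * Kop κ n φ q ∂μ) / (∫ q, gfun κ n q ∂μ) := by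
  simp_rw [FK, gfun_mul_Kop, gfun]

end

/-- Path-space reformulation of the discretized Feynman–Kac semigroup:
`Φ_n(μ)(φ) = μ(g_n · (K_n φ)) / μ(g_n)`. -/
theorem feynman_kac_weighted_reformulation
    {X : Type*} [MeasurableSpace X] (κ : Kernel X X) [IsFiniteKernel κ]
    (ε : ℝ) (hε : ε ∈ Set.Ioo (0:ℝ) 1) (η : Measure X) [IsProbabilityMeasure η]
    (hmin : Minorizes (evolOp κ) ε η)
    (μ : Measure X) [IsProbabilityMeasure μ] (n : ℕ)
    (φ : X → ℝ) (hφ : BddMeas φ) :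
    FK κ μ n φ = (∫ q, gfun κ n q * Kop κ n φ q ∂μ) / (∫ q, gfun κ n q ∂μ) :=
  feynman_kac_weighted_reformulation_general κ μ n φ
end

section
/- Let X be a measurable space, Q a weighted evolution operator on X, W : X → ℝ a bounded measurable function, and Δt > 0. For δ ∈ [0,1] define the weighted evolution operator Q^{W,δ} by (Q^{W,δ}φ)(q) = e^{(1−δ)Δt W(q)} · Q(e^{δ Δt W} φ)(q). Suppose Q^{W,δ₀} satisfies the minorization condition for at least one δ₀ ∈ [0,1]. Then Q^{W,δ} satisfies a minorization condition for every δ ∈ [0,1], and the associated approximate principal eigenvalue λ_Δt^δ = (1/Δt)·log ν_δ(Q^{W,δ}1), where ν_δ is the unique invariant probability measure of Q^{W,δ}, is independent of δ: λ_Δt^δ = λ_Δt^{δ'} for all δ, δ' ∈ [0,1]. -/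
open MeasureTheory ProbabilityTheory

/-- The family of weighted evolution operators
`(Q^{W,δ}φ)(q) = e^{(1−δ)Δt W(q)} · Q(e^{δΔtW} φ)(q)`. -/
noncomputable def QWdelta {X : Type*} [MeasurableSpace X] (κ : Kernel X X) (W : X → ℝ)
    (Δt δ : ℝ) (φ : X → ℝ) : X → ℝ :=
  fun q => Real.exp ((1 - δ) * Δt * W q) *
    evolOp κ (fun q' => Real.exp (δ * Δt * W q') * φ q') q

/-! All the operators `Q^{W,δ}` are conjugate to one another by multiplication by exponentials
`e^f` with `f` bounded. Conjugating by `e^f` preserves minorization, up to a worse constant, and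
turns an eigenmeasure `ν` into the exponentially tilted measure `e^f ν / ν(e^f)`, with the same
eigenvalue. It remains to see that a minorized operator has only one eigenvalue: `l ^ n` and
`l' ^ n` are the integrals of `Qⁿ1` against two probability measures, and minorization makes these
integrals comparable uniformly in `n`. -/

/-- The operator `e^{-f} Q e^f`, where `e^f` acts by multiplication. It relates the schemes
`Q^{W,δ}` with different `δ`. -/
noncomputable def expConj {X : Type*} (Q : (X → ℝ) → X → ℝ) (f : X → ℝ) (φ : X → ℝ) : X → ℝ :=
  fun q => Real.exp (-f q) * Q (fun x => Real.exp (f x) * φ x) q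

/-- The measure `ν` is a left eigenvector of `Q` with eigenvalue `l`: `ν(Qφ) = l ν(φ)` for all
bounded measurable `φ`. For a probability measure `ν` this forces `l = ν(Q1)`; keeping `l` as a
parameter lets the eigenvalue be transported between operators. -/
def IsEigenmeasure {X : Type*} [MeasurableSpace X] (Q : (X → ℝ) → X → ℝ) (l : ℝ)
    (ν : Measure X) : Prop :=
  ∀ φ : X → ℝ, BddMeas φ → ∫ q, Q φ q ∂ν = l * ∫ q, φ q ∂ν

theorem le_of_frequently_pow_le_mul_pow {a b K : ℝ} (hb : 0 ≤ b) (hK : 0 < K)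
    (h : ∃ᶠ n : ℕ in Filter.atTop, a ^ n ≤ K * b ^ n) : a ≤ b := by
  by_contra! hab
  have ha : 0 < a := hb.trans_lt hab
  have hratio : ∀ᶠ n : ℕ in Filter.atTop, (b / a) ^ n < K⁻¹ :=
    tendsto_pow_atTop_nhds_zero_of_lt_one (by positivity) ((div_lt_one ha).2 hab)
      |>.eventually_lt_const (inv_pos.2 hK)
  obtain ⟨n, hle, hlt⟩ := (h.and_eventually hratio).exists
  rw [div_pow, div_lt_iff₀ (pow_pos ha n), lt_inv_mul_iff₀ hK] at hlt
  exact hlt.not_ge hle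

section

variable {X : Type*} [MeasurableSpace X]

theorem bddMeas_const (c : ℝ) : BddMeas fun _ : X => c :=
  ⟨measurable_const, |c|, fun _ => le_rfl⟩

namespace BddMeas

variable {f φ ψ : X → ℝ}

theorem mul (hφ : BddMeas φ) (hψ : BddMeas ψ) : BddMeas fun x => φ x * ψ x := by
  obtain ⟨hφm, C, hC⟩ := hφ
  obtain ⟨hψm, D, hD⟩ := hψ
  refine ⟨hφm.mul hψm, C * D, fun x => ?_⟩
  rw [abs_mul]
  exact mul_le_mul (hC x) (hD x) (abs_nonneg _) ((abs_nonneg _).trans (hC x))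

theorem exp (hf : BddMeas f) : BddMeas fun x => Real.exp (f x) := by
  obtain ⟨hfm, C, hC⟩ := hf
  refine ⟨hfm.exp, Real.exp C, fun x => ?_⟩
  rw [Real.abs_exp]
  exact Real.exp_le_exp.2 (le_of_abs_le (hC x))

theorem integrable_s9 (hφ : BddMeas φ) (μ : Measure X) [IsFiniteMeasure μ] : Integrable φ μ := by
  obtain ⟨hφm, C, hC⟩ := hφ
  exact .of_bound hφm.aestronglyMeasurable C (.of_forall hC)

end BddMeas

theorem integral_exp_mul_mem_Icc {f φ : X → ℝ} {C : ℝ} (hf : Measurable f) (hfC : ∀ x, |f x| ≤ C)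
    (hφ : BddMeas φ) (hφ0 : ∀ x, 0 ≤ φ x) (μ : Measure X) [IsFiniteMeasure μ] :
    ∫ x, Real.exp (f x) * φ x ∂μ ∈
      Set.Icc (Real.exp (-C) * ∫ x, φ x ∂μ) (Real.exp C * ∫ x, φ x ∂μ) := by
  have hint : Integrable (fun x => Real.exp (f x) * φ x) μ :=
    (BddMeas.exp ⟨hf, C, hfC⟩ |>.mul hφ).integrable_s9 μ
  simp_rw [Set.mem_Icc, ← integral_const_mul]
  constructor
  · refine integral_mono ((hφ.integrable_s9 μ).const_mul _) hint fun x => ?_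
    exact mul_le_mul_of_nonneg_right (Real.exp_le_exp.2 (abs_le.1 (hfC x)).1) (hφ0 x)
  · refine integral_mono hint ((hφ.integrable_s9 μ).const_mul _) fun x => ?_
    exact mul_le_mul_of_nonneg_right (Real.exp_le_exp.2 (abs_le.1 (hfC x)).2) (hφ0 x)

variable {Q : (X → ℝ) → X → ℝ} {ε l l' : ℝ} {f : X → ℝ} {η ν ν' : Measure X}

theorem Minorizes.expConj_of_abs_le [IsFiniteMeasure η] {C : ℝ} (hQ : Minorizes Q ε η)
    (hε : 0 < ε) (hf : Measurable f) (hfC : ∀ x, |f x| ≤ C) :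
    Minorizes (expConj Q f) (ε * Real.exp (-(2 * C))) η := by
  intro φ hφ hφ0 q
  obtain ⟨hQ_ge, hQ_le⟩ := hQ _ (BddMeas.exp ⟨hf, C, hfC⟩ |>.mul hφ)
    (fun x => mul_nonneg (Real.exp_pos _).le (hφ0 x)) q
  obtain ⟨hint_ge, hint_le⟩ := integral_exp_mul_mem_Icc hf hfC hφ hφ0 η
  have hint0 : 0 ≤ ∫ x, φ x ∂η := integral_nonneg hφ0
  have hfq_le : f q ≤ C := le_of_abs_le (hfC q)
  have hneg_fq_le : -f q ≤ C := (neg_le_abs _).trans (hfC q)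
  have hexp : Real.exp (-(2 * C)) = Real.exp (-C) * Real.exp (-C) := by
    rw [← Real.exp_add]; ring_nf
  have hexp_inv : (Real.exp (-(2 * C)))⁻¹ = Real.exp C * Real.exp C := by
    rw [← Real.exp_neg, ← Real.exp_add]; ring_nf
  constructor
  · calc ε * Real.exp (-(2 * C)) * ∫ x, φ x ∂η
        = Real.exp (-C) * (ε * (Real.exp (-C) * ∫ x, φ x ∂η)) := by rw [hexp]; ring
      _ ≤ Real.exp (-f q) * (ε * ∫ x, Real.exp (f x) * φ x ∂η) := by gcongr
      _ ≤ expConj Q f φ q := mul_le_mul_of_nonneg_left hQ_ge (Real.exp_pos _).le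
  · calc expConj Q f φ q
        ≤ Real.exp (-f q) * (ε⁻¹ * ∫ x, Real.exp (f x) * φ x ∂η) :=
          mul_le_mul_of_nonneg_left hQ_le (Real.exp_pos _).le
      _ ≤ Real.exp (-f q) * (ε⁻¹ * (Real.exp C * ∫ x, φ x ∂η)) := by gcongr
      _ ≤ Real.exp C * (ε⁻¹ * (Real.exp C * ∫ x, φ x ∂η)) := by gcongr
      _ = (ε * Real.exp (-(2 * C)))⁻¹ * ∫ x, φ x ∂η := by rw [mul_inv, hexp_inv]; ring

theorem Minorizes.exists_expConj [IsFiniteMeasure η] (hQ : Minorizes Q ε η)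
    (hε : ε ∈ Set.Ioo (0 : ℝ) 1) (hf : BddMeas f) :
    ∃ ε' ∈ Set.Ioo (0 : ℝ) 1, Minorizes (expConj Q f) ε' η := by
  obtain ⟨hfm, C, hC⟩ := hf
  have hexp : Real.exp (-(2 * |C|)) ≤ 1 := Real.exp_le_one_iff.2 (by simp)
  exact ⟨ε * Real.exp (-(2 * |C|)), ⟨mul_pos hε.1 (Real.exp_pos _),
    mul_lt_one_of_nonneg_of_lt_one_left hε.1.le hε.2 hexp⟩,
    hQ.expConj_of_abs_le hε.1 hfm fun x => (hC x).trans (le_abs_self C)⟩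

theorem IsEigenmeasure.expConj_tilted (hν : IsEigenmeasure Q l ν) (hf : BddMeas f) :
    IsEigenmeasure (expConj Q f) l (ν.tilted f) := by
  intro φ hφ
  have hcancel : ∀ q, Real.exp (f q) * expConj Q f φ q = Q (fun x => Real.exp (f x) * φ x) q :=
    fun q => by rw [expConj, ← mul_assoc, ← Real.exp_add, add_neg_cancel, Real.exp_zero, one_mul]
  have htilted : ∀ ψ : X → ℝ,
      ∫ q, ψ q ∂ν.tilted f = (∫ q, Real.exp (f q) * ψ q ∂ν) / ∫ q, Real.exp (f q) ∂ν := by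
    intro ψ
    simp_rw [integral_tilted, smul_eq_mul, div_mul_eq_mul_div, integral_div]
  simp_rw [htilted, hcancel, hν _ (hf.exp.mul hφ), mul_div_assoc]

namespace Minorizes

theorem mapsTo_bddMeas_nonneg (hQ : Minorizes Q ε η) (hε : 0 ≤ ε)
    (hmeas : ∀ φ, BddMeas φ → Measurable (Q φ)) :
    Set.MapsTo Q {φ | BddMeas φ ∧ ∀ x, 0 ≤ φ x} {φ | BddMeas φ ∧ ∀ x, 0 ≤ φ x} := by
  rintro φ ⟨hφ, hφ0⟩
  have hQφ0 : ∀ q, 0 ≤ Q φ q := fun q =>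
    (mul_nonneg hε (integral_nonneg hφ0)).trans (hQ φ hφ hφ0 q).1
  refine ⟨⟨hmeas φ hφ, ε⁻¹ * ∫ x, φ x ∂η, fun q => ?_⟩, hQφ0⟩
  rw [abs_of_nonneg (hQφ0 q)]
  exact (hQ φ hφ hφ0 q).2

theorem iterate_one_mem (hQ : Minorizes Q ε η) (hε : 0 ≤ ε)
    (hmeas : ∀ φ, BddMeas φ → Measurable (Q φ)) (n : ℕ) :
    Q^[n] (fun _ => 1) ∈ {φ | BddMeas φ ∧ ∀ x, 0 ≤ φ x} :=
  (hQ.mapsTo_bddMeas_nonneg hε hmeas).iterate n ⟨bddMeas_const 1, fun _ => zero_le_one⟩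

theorem integral_apply_mem_Icc [IsProbabilityMeasure ν] (hQ : Minorizes Q ε η) {φ : X → ℝ}
    (hφ : BddMeas φ) (hφ0 : ∀ x, 0 ≤ φ x) (hQφ : BddMeas (Q φ)) :
    ∫ q, Q φ q ∂ν ∈ Set.Icc (ε * ∫ x, φ x ∂η) (ε⁻¹ * ∫ x, φ x ∂η) :=
  (convex_Icc _ _).integral_mem isClosed_Icc (.of_forall (hQ φ hφ hφ0)) (hQφ.integrable_s9 ν)

theorem integral_apply_le_mul_integral_apply [IsProbabilityMeasure ν] [IsProbabilityMeasure ν']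
    (hQ : Minorizes Q ε η) (hε : 0 < ε) {φ : X → ℝ} (hφ : BddMeas φ) (hφ0 : ∀ x, 0 ≤ φ x)
    (hQφ : BddMeas (Q φ)) :
    ∫ q, Q φ q ∂ν ≤ ε⁻¹ ^ 2 * ∫ q, Q φ q ∂ν' := by
  have hν : ∫ q, Q φ q ∂ν ≤ ε⁻¹ * ∫ x, φ x ∂η := (hQ.integral_apply_mem_Icc hφ hφ0 hQφ).2
  have hν' : ε * ∫ x, φ x ∂η ≤ ∫ q, Q φ q ∂ν' := (hQ.integral_apply_mem_Icc hφ hφ0 hQφ).1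
  calc ∫ q, Q φ q ∂ν ≤ ε⁻¹ * ∫ x, φ x ∂η := hν
    _ = ε⁻¹ ^ 2 * (ε * ∫ x, φ x ∂η) := by field_simp
    _ ≤ ε⁻¹ ^ 2 * ∫ q, Q φ q ∂ν' := by gcongr

end Minorizes

namespace IsEigenmeasure

theorem integral_iterate_one [IsProbabilityMeasure ν] (hν : IsEigenmeasure Q l ν)
    (hbdd : ∀ n, BddMeas (Q^[n] fun _ => 1)) (n : ℕ) :
    ∫ q, Q^[n] (fun _ => 1) q ∂ν = l ^ n := by
  induction n with
  | zero => simp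
  | succ n ih => rw [Function.iterate_succ_apply', hν _ (hbdd n), ih, pow_succ']

theorem eigenvalue_le_of_minorizes [IsProbabilityMeasure ν] [IsProbabilityMeasure ν']
    (hν : IsEigenmeasure Q l ν) (hν' : IsEigenmeasure Q l' ν') (hQ : Minorizes Q ε η) (hε : 0 < ε)
    (hmeas : ∀ φ, BddMeas φ → Measurable (Q φ)) : l ≤ l' := by
  have hiter := hQ.iterate_one_mem hε.le hmeas
  have hpow := hν.integral_iterate_one fun n => (hiter n).1
  have hpow' := hν'.integral_iterate_one fun n => (hiter n).1
  have hl' : 0 ≤ l' := by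
    rw [← pow_one l', ← hpow' 1]
    exact integral_nonneg (hiter 1).2
  have hcompare : ∀ n, l ^ (n + 1) ≤ ε⁻¹ ^ 2 * l' ^ (n + 1) := by
    intro n
    have hsucc := (hiter (n + 1)).1
    rw [← hpow, ← hpow']
    rw [Function.iterate_succ_apply'] at hsucc ⊢
    exact hQ.integral_apply_le_mul_integral_apply hε (hiter n).1 (hiter n).2 hsucc
  refine le_of_frequently_pow_le_mul_pow hl' (K := ε⁻¹ ^ 2) (by positivity)
    (Filter.Eventually.frequently ?_)
  filter_upwards [Filter.eventually_ne_atTop 0] with n hn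
  obtain ⟨m, rfl⟩ := Nat.exists_eq_succ_of_ne_zero hn
  exact hcompare m

theorem eigenvalue_eq_of_minorizes [IsProbabilityMeasure ν] [IsProbabilityMeasure ν']
    (hν : IsEigenmeasure Q l ν) (hν' : IsEigenmeasure Q l' ν') (hQ : Minorizes Q ε η) (hε : 0 < ε)
    (hmeas : ∀ φ, BddMeas φ → Measurable (Q φ)) : l = l' :=
  le_antisymm (hν.eigenvalue_le_of_minorizes hν' hQ hε hmeas)
    (hν'.eigenvalue_le_of_minorizes hν hQ hε hmeas)

end IsEigenmeasure

theorem measurable_QWdelta (κ : Kernel X X) [IsSFiniteKernel κ] {W : X → ℝ} (hW : Measurable W)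
    (Δt δ : ℝ) {φ : X → ℝ} (hφ : Measurable φ) : Measurable (QWdelta κ W Δt δ φ) := by
  have hintegrand : Measurable fun x => Real.exp (δ * Δt * W x) * φ x := by fun_prop
  exact (hW.const_mul _).exp.mul hintegrand.stronglyMeasurable.integral_kernel.measurable

theorem QWdelta_eq_expConj (κ : Kernel X X) (W : X → ℝ) (Δt δ δ' : ℝ) :
    QWdelta κ W Δt δ' = expConj (QWdelta κ W Δt δ) fun q => (δ' - δ) * Δt * W q := by
  funext φ q
  simp only [expConj, QWdelta, ← mul_assoc, ← Real.exp_add]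
  ring_nf

end

theorem eigenvalue_independent_of_integration_rule_general
    {X : Type*} [MeasurableSpace X] (κ : Kernel X X) [IsFiniteKernel κ]
    (W : X → ℝ) (hW : BddMeas W) (Δt δ₀ : ℝ)
    (ε₀ : ℝ) (hε₀ : ε₀ ∈ Set.Ioo (0 : ℝ) 1) (η₀ : Measure X) [IsFiniteMeasure η₀]
    (hmin₀ : Minorizes (QWdelta κ W Δt δ₀) ε₀ η₀) :
    (∀ δ : ℝ, ∃ ε ∈ Set.Ioo (0 : ℝ) 1, Minorizes (QWdelta κ W Δt δ) ε η₀) ∧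
    (∀ (δ δ' l l' : ℝ) (ν ν' : Measure X) [IsProbabilityMeasure ν] [IsProbabilityMeasure ν'],
      IsEigenmeasure (QWdelta κ W Δt δ) l ν → IsEigenmeasure (QWdelta κ W Δt δ') l' ν' →
      l = l') := by
  have hf : ∀ δ δ' : ℝ, BddMeas fun q => (δ' - δ) * Δt * W q := fun _ _ => (bddMeas_const _).mul hW
  have hmin : ∀ δ, ∃ ε ∈ Set.Ioo (0 : ℝ) 1, Minorizes (QWdelta κ W Δt δ) ε η₀ := fun δ => by
    rw [QWdelta_eq_expConj κ W Δt δ₀ δ]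
    exact hmin₀.exists_expConj hε₀ (hf δ₀ δ)
  refine ⟨hmin, fun δ δ' l l' ν ν' _ _ hν hν' => ?_⟩
  obtain ⟨ε, hε, hminδ'⟩ := hmin δ'
  have : IsProbabilityMeasure (ν.tilted fun q => (δ' - δ) * Δt * W q) :=
    isProbabilityMeasure_tilted ((hf δ δ').exp.integrable_s9 ν)
  have htilted : IsEigenmeasure (QWdelta κ W Δt δ') l (ν.tilted fun q => (δ' - δ) * Δt * W q) := by
    rw [QWdelta_eq_expConj κ W Δt δ δ']
    exact hν.expConj_tilted (hf δ δ')
  exact htilted.eigenvalue_eq_of_minorizes hν' hminδ' hε.1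
    fun φ hφ => measurable_QWdelta κ hW.1 Δt δ' hφ.1

/-- The approximate principal eigenvalue of the familly of schemes `Q^{W,δ}` is
independent of the integration rule δ ∈ [0,1]: if one of the schemes satisfies a
minorization condition, then all of them do, and the associated eigenvalues
`(1/Δt) log ν_δ(Q^{W,δ}1)` all coincide. -/
theorem eigenvalue_independent_of_integration_rule
    {X : Type*} [MeasurableSpace X] (κ : Kernel X X) [IsFiniteKernel κ]
    (W : X → ℝ) (hW : BddMeas W) (Δt : ℝ) (hΔt : 0 < Δt)
    (δ₀ : ℝ) (hδ₀ : δ₀ ∈ Set.Icc (0:ℝ) 1)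
    (ε₀ : ℝ) (hε₀ : ε₀ ∈ Set.Ioo (0:ℝ) 1) (η₀ : Measure X) [IsProbabilityMeasure η₀]
    (hmin₀ : Minorizes (QWdelta κ W Δt δ₀) ε₀ η₀) :
    (∀ δ ∈ Set.Icc (0:ℝ) 1, ∃ ε ∈ Set.Ioo (0:ℝ) 1, ∃ η : Measure X,
      IsProbabilityMeasure η ∧ Minorizes (QWdelta κ W Δt δ) ε η) ∧
    (∀ δ ∈ Set.Icc (0:ℝ) 1, ∀ δ' ∈ Set.Icc (0:ℝ) 1,
      ∀ ν ν' : Measure X, IsProbabilityMeasure ν → IsProbabilityMeasure ν' →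
      (∀ φ : X → ℝ, BddMeas φ → ∫ q, QWdelta κ W Δt δ φ q ∂ν =
        (∫ q, QWdelta κ W Δt δ (fun _ => (1:ℝ)) q ∂ν) * ∫ q, φ q ∂ν) →
      (∀ φ : X → ℝ, BddMeas φ → ∫ q, QWdelta κ W Δt δ' φ q ∂ν' =
        (∫ q, QWdelta κ W Δt δ' (fun _ => (1:ℝ)) q ∂ν') * ∫ q, φ q ∂ν') →
      (1 / Δt) * Real.log (∫ q, QWdelta κ W Δt δ (fun _ => (1:ℝ)) q ∂ν) =
        (1 / Δt) * Real.log (∫ q, QWdelta κ W Δt δ' (fun _ => (1:ℝ)) q ∂ν')) := by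
  obtain ⟨hmin, heigenvalue⟩ :=
    eigenvalue_independent_of_integration_rule_general κ W hW Δt δ₀ ε₀ hε₀ η₀ hmin₀
  refine ⟨fun δ _ => (hmin δ).imp fun _ ⟨hε, hminδ⟩ => ⟨hε, η₀, inferInstance, hminδ⟩, ?_⟩
  intro δ _ δ' _ ν ν' _ _ hν hν'
  rw [heigenvalue δ δ' _ _ ν ν' hν hν']
end
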